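/- Fix f : ℕ. Let V be a type of blocks with functions author : V → Fin (2*f+1), round : V → ℕ, and a relation P : V → V → Prop (P a b means block b references block a, i.e., a is a parent of b). Assume: (i) per-round uniqueness: any two blocks with the same author and the same round are equal; (ii) references point backwards: P a b implies round a < round b; (iii) quorum references: every block b with round b ≥ 1 admits a finset S of blocks with S.card ≥ f+1 such that every s ∈ S satisfies round s = round b − 1 and P s b. Suppose B : V, R : ℕ, and there is a finset W of blocks with W.card ≥ f+1 such that every w ∈ W satisfies round w = R and P B w (i.e., f+1 blocks from distinct replicas at round R vote for B). Then every block b with round b > R satisfies Relation.TransGen P B b (b has a path to B). -/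

import Mathlib

/-!
Blocks of one round are determined by their authors, so two sets of such blocks whose sizes add up
to more than the number of authors intersect. Hence a block of round `R + 1` references one of the
voters for `B` in round `R`. A block of a later round reaches round `R + 1` by going back through
any one parent in each round.
-/

section QuorumIntersection

variable {V α : Type*} [Fintype α] {g : V → α}

lemma card_le_fintype_card_of_injOn {S : Finset V} (hg : Set.InjOn g S) :
    S.card ≤ Fintype.card α :=
  Finset.card_le_card_of_injOn g (fun _ _ ↦ Finset.mem_univ _) hg

lemma exists_mem_mem_of_injOn_of_card_lt {T : Set V} (hg : Set.InjOn g T) {S W : Finset V}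
    (hS : ↑S ⊆ T) (hW : ↑W ⊆ T) (hcard : Fintype.card α < S.card + W.card) :
    ∃ x ∈ S, x ∈ W := by
  classical
  have hunion : (S ∪ W).card ≤ Fintype.card α :=
    card_le_fintype_card_of_injOn <| hg.mono <| by
      rw [Finset.coe_union]
      exact Set.union_subset hS hW
  obtain ⟨x, hx⟩ := Finset.inter_nonempty_of_card_lt_card_add_card
    Finset.subset_union_left Finset.subset_union_right (hunion.trans_lt hcard)
  exact ⟨x, Finset.mem_inter.mp hx⟩

end QuorumIntersection

section Paths

variable {V : Type*} {round : V → ℕ} {P : V → V → Prop} {B : V}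

lemma transGen_of_forall_round_eq {m : ℕ}
    (hbase : ∀ b, round b = m → Relation.TransGen P B b)
    (hparent : ∀ b, m < round b → ∃ a, round a = round b - 1 ∧ P a b)
    (b : V) (hb : m ≤ round b) : Relation.TransGen P B b := by
  generalize hr : round b = r at hb
  induction r, hb using Nat.le_induction generalizing b with
  | base => exact hbase b hr
  | succ r hmr ih =>
    obtain ⟨a, ha, hab⟩ := hparent b (by omega)
    exact (ih a (by omega)).tail hab

theorem path_exists_general {α : Type*} [Fintype α] {author : V → α} {R : ℕ} {W : Finset V}
    (huniq : Set.InjOn author {a | round a = R})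
    (hquorum : ∀ b, R < round b → ∃ S : Finset V, Fintype.card α < S.card + W.card ∧
      ∀ s ∈ S, round s = round b - 1 ∧ P s b)
    (hW : ∀ w ∈ W, round w = R ∧ P B w) (b : V) (hb : R < round b) :
    Relation.TransGen P B b := by
  have hWround : ↑W ⊆ {a | round a = R} := fun w hw ↦ (hW w hw).1
  refine transGen_of_forall_round_eq (m := R + 1) (fun c hc ↦ ?_) (fun c hc ↦ ?_) b hb
  · obtain ⟨S, hcard, hS⟩ := hquorum c (by omega)
    have hSround : ↑S ⊆ {a | round a = R} := fun s hs ↦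
      (hS s hs).1.trans (by omega)
    obtain ⟨x, hxS, hxW⟩ := exists_mem_mem_of_injOn_of_card_lt huniq hSround hWround hcard
    exact .tail (.single (hW x hxW).2) (hS x hxS).2
  · obtain ⟨S, hcard, hS⟩ := hquorum c (by omega)
    have hWcard : W.card ≤ Fintype.card α := card_le_fintype_card_of_injOn (huniq.mono hWround)
    obtain ⟨s, hs⟩ : S.Nonempty := Finset.card_pos.mp (by omega)
    exact ⟨s, hS s hs⟩

end Paths

/-- Lemma 1 (path-exists): if f+1 blocks of round R vote for (directly
reference) a block B, then every block of a round greater than R has a path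
(chain of reference steps) to B. -/
theorem path_exists (f : ℕ) (V : Type*)
    (author : V → Fin (2*f+1)) (round : V → ℕ) (P : V → V → Prop)
    (huniq : ∀ a b : V, author a = author b → round a = round b → a = b)
    (hback : ∀ a b : V, P a b → round a < round b)
    (hquorum : ∀ b : V, 1 ≤ round b →
      ∃ S : Finset V, f + 1 ≤ S.card ∧ ∀ s ∈ S, round s = round b - 1 ∧ P s b)
    (B : V) (R : ℕ) (W : Finset V) (hWcard : f + 1 ≤ W.card)
    (hW : ∀ w ∈ W, round w = R ∧ P B w) :
    ∀ b : V, R < round b → Relation.TransGen P B b :=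
  path_exists_general (fun a ha b hb hab ↦ huniq a b hab (ha.trans hb.symm))
    (fun b hb ↦ (hquorum b (by omega)).imp fun S hS ↦ ⟨by rw [Fintype.card_fin]; omega, hS.2⟩) hW
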